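/- Let α ∈ (0,1) be irrational and m ≥ 0. Let (j_h^{(m)})_{h≥0} be the increasing enumeration of the indices j ≥ 1 with g_j^{(m)} = q_2^{(m)} + q_1^{(m)}. Then j_0^{(m)} = a_{m+3} + 1 and j_h^{(m)} − j_{h−1}^{(m)} = t_h^{(m+2)} for all h ≥ 1. -/

import Mathlib

open Filter Finset

noncomputable section

/-- The Gauss map `G(x) = {1/x}` (with `G(0) = 0`, since `0⁻¹ = 0` in Lean). -/
def gaussMap (x : ℝ) : ℝ := Int.fract x⁻¹

/-- `α_m = G^m(α)`. -/
def gaussIter (α : ℝ) (m : ℕ) : ℝ := gaussMap^[m] α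

/-- The `h`-th partial quotient `a_h` of `α` (meaningful for `h ≥ 1`):
`a_h = ⌊(G^{h-1} α)⁻¹⌋`. -/
def pq (α : ℝ) (h : ℕ) : ℕ := ⌊(gaussIter α (h - 1))⁻¹⌋₊

/-- Denominators `q_n` of the convergents of `α`:
`q_0 = 1`, `q_1 = a_1`, `q_{n+2} = a_{n+2} q_{n+1} + q_n`. -/
def qden (α : ℝ) : ℕ → ℕ
  | 0 => 1
  | 1 => pq α 1
  | (n + 2) => pq α (n + 2) * qden α (n + 1) + qden α n

/-- Numerators `p_n` of the convergents of `α`: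
`p_0 = 0`, `p_1 = 1`, `p_{n+2} = a_{n+2} p_{n+1} + p_n`. -/
def pnum (α : ℝ) : ℕ → ℕ
  | 0 => 0
  | 1 => 1
  | (n + 2) => pq α (n + 2) * pnum α (n + 1) + pnum α n

/-- `f_n = (-1)^n (q_n α - p_n)`. -/
def fseq (α : ℝ) (n : ℕ) : ℝ := (-1) ^ n * ((qden α n : ℝ) * α - (pnum α n : ℝ))

/-- `r_k = min {r ≥ 0 : ⌊r α⌋ = k}`. -/
def rmin (α : ℝ) (k : ℕ) : ℕ := sInf {r : ℕ | ⌊(r : ℝ) * α⌋ = (k : ℤ)}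

/-- `t_k = #{r ≥ 0 : ⌊r α⌋ = k}`. -/
def tcount (α : ℝ) (k : ℕ) : ℕ := Set.ncard {r : ℕ | ⌊(r : ℝ) * α⌋ = (k : ℤ)}

/-- `(k_j)_{j ≥ 0}`: the increasing enumeration of `{k : t_k = a_1 + 1}`. -/
def kseq (α : ℝ) (j : ℕ) : ℕ := Nat.nth (fun k => tcount α k = pq α 1 + 1) j

/-- The gaps `g_j = r_{k_j} - r_{k_{j-1}}` (for `j ≥ 1`). -/
def gseq (γ : ℝ) (j : ℕ) : ℕ := rmin γ (kseq γ j) - rmin γ (kseq γ (j - 1))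

/-- `(j_h)_{h ≥ 0}`: the increasing enumeration of those `j ≥ 1` with
`g_j = q_2 + q_1`. -/
def jbig (γ : ℝ) (h : ℕ) : ℕ :=
  Nat.nth (fun j => 1 ≤ j ∧ gseq γ j = qden γ 2 + qden γ 1) h

/-- `ᾱ_1 = G(α)/(1 - G(α))`. -/
def abar (α : ℝ) : ℝ := gaussIter α 1 / (1 - gaussIter α 1)

/-- The Ostrowski representation `r = ∑_{h=0}^N c_h q_h` with `0 ≤ c_h ≤ a_{h+1}`,
`c_{h-1} = 0` whenever `c_h = a_{h+1}`, and `c_N > 0`; `N = ord r`. -/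
def IsOstrowski (α : ℝ) (r N : ℕ) (c : ℕ → ℕ) : Prop :=
  r = ∑ h ∈ Finset.range (N + 1), c h * qden α h ∧
  (∀ h, c h ≤ pq α (h + 1)) ∧
  (∀ h, c (h + 1) = pq α (h + 2) → c h = 0) ∧
  0 < c N ∧ ∀ h, N < h → c h = 0

/-- The order `ord r` of a positive integer `r`. -/
def ordOst (α : ℝ) (r : ℕ) : ℕ := sInf {N | ∃ c, IsOstrowski α r N c}

/-- `s(y) = 2 χ_{[0,1/2)}({y}) - 1`. -/
def sfun (y : ℝ) : ℝ := if Int.fract y < 1 / 2 then 1 else -1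

/-- `S_n(α, β) = ∑_{r=0}^n s({r α + β})`. -/
def Sgen (α β : ℝ) (n : ℕ) : ℝ := ∑ r ∈ Finset.range (n + 1), sfun ((r : ℝ) * α + β)

/-- `S_n(α) = S_n(α, 0)`. -/
def Ssum (α : ℝ) (n : ℕ) : ℝ := Sgen α 0 n

/-- `max_{0 ≤ n ≤ r} S_n(α)`. -/
def maxS (α : ℝ) (r : ℕ) : ℝ := sSup (Ssum α '' Set.Iic r)

/-- `min_{0 ≤ n ≤ r} S_n(α)`. -/
def minS (α : ℝ) (r : ℕ) : ℝ := sInf (Ssum α '' Set.Iic r)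

/-- `d_n(α, β) = ∑_{r=0}^{n-1} χ_{[0,β)}({r α}) - β n`. -/
def ddisc (α β : ℝ) (n : ℕ) : ℝ :=
  (∑ r ∈ Finset.range n, if Int.fract ((r : ℝ) * α) < β then (1 : ℝ) else 0) - β * n

/-- `j(r) = max {j + sgn R₁ - 1, 0}` from the decomposition `r = r_{k_j} + R₁ q₁ + R₀`. -/
def jfun (j R1 : ℕ) : ℕ := if R1 = 0 then j - 1 else j

/-- `i(r) = k_j - j + max {R₁ - 1, 0}` from the decomposition `r = r_{k_j} + R₁ q₁ + R₀`. -/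
def ifun (α : ℝ) (j R1 : ℕ) : ℕ := kseq α j - j + (R1 - 1)

/-- `S̃(r)` from the decomposition `r = r_{k_j} + R₁ q₁ + R₀`. -/
def Stil (α : ℝ) (r R1 R0 : ℕ) : ℝ :=
  if R0 = 0 then (if R1 = 0 then sfun ((r : ℝ) * α) else 0)
  else if R1 = 0 then ∑ i ∈ Finset.Icc (r - R0) r, sfun ((i : ℝ) * α)
  else ∑ i ∈ Finset.Icc (r - R0 + 1) r, sfun ((i : ℝ) * α)

/-- `sup_{β ∈ (0,1)} |d_n(α, β)| = n D_n^*(α)`. -/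
def nDsup (α : ℝ) (n : ℕ) : ℝ := sSup ((fun β => |ddisc α β n|) '' Set.Ioo (0 : ℝ) 1)

/-- The discrepancy `D_n^*(α) = sup_{β ∈ (0,1)} |d_n(α, β)| / n`. -/
def Dstar (α : ℝ) (n : ℕ) : ℝ :=
  sSup ((fun β => |ddisc α β n| / (n : ℝ)) '' Set.Ioo (0 : ℝ) 1)

theorem aux_nth (p : ℕ → Prop) (f : ℕ → ℕ) (hf : StrictMono f)
    (hp : ∀ k, p k ↔ ∃ j, f j = k) (n : ℕ) : Nat.nth p n = f n := by
  have hinf : (Set.ofPred p).Infinite := by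
    have : Set.ofPred p = Set.range f := by
      ext k; exact hp k
    rw [this]
    exact Set.infinite_range_of_injective hf.injective
  have h1 := Nat.nth_strictMono hinf
  have h2 : Set.range (Nat.nth p) = Set.range f := by
    rw [Nat.range_nth_of_infinite hinf]
    ext k; exact hp k
  exact congrFun ((StrictMono.range_inj h1 hf).1 h2) n

theorem aux_set (x : ℝ) (hx : 0 < x) (k : ℕ) :
    {r : ℕ | ⌊(r : ℝ) * x⌋ = (k : ℤ)} = Set.Ico ⌈(k : ℝ) / x⌉₊ ⌈((k + 1 : ℕ) : ℝ) / x⌉₊ := by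
  ext r
  simp only [Set.mem_ofPred_eq, Set.mem_Ico, Nat.ceil_le, Nat.lt_ceil, Int.floor_eq_iff]
  rw [div_le_iff₀ hx, lt_div_iff₀ hx]
  push_cast
  rfl

theorem aux_tcount (x : ℝ) (hx : 0 < x) (k : ℕ) :
    tcount x k = ⌈((k + 1 : ℕ) : ℝ) / x⌉₊ - ⌈(k : ℝ) / x⌉₊ := by
  rw [tcount, aux_set x hx, ← Nat.card_coe_set_eq]
  simp

theorem aux_rmin (x : ℝ) (hx : 0 < x) (hx1 : x < 1) (k : ℕ) :
    rmin x k = ⌈(k : ℝ) / x⌉₊ := by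
  rw [rmin, aux_set x hx]
  apply csInf_Ico
  rw [Nat.lt_ceil]
  have h := Nat.ceil_lt_add_one (a := (k : ℝ) / x) (by positivity)
  refine h.trans ?_
  have : 1 < 1 / x := by rw [lt_div_iff₀ hx]; linarith
  push_cast
  rw [add_div]
  linarith

theorem aux_ceil (x y : ℝ) (a : ℕ) (hy : 0 < y) (hxy : x⁻¹ = a + y) (k : ℕ) :
    ⌈(k : ℝ) / x⌉₊ = ⌈(k : ℝ) * y⌉₊ + a * k := by
  rw [div_eq_mul_inv, hxy, ← Nat.ceil_add_natCast (by positivity)]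
  congr 1
  push_cast
  ring

theorem aux_ceil_eq (x : ℝ) (n : ℕ) (h1 : x ≤ n) (h2 : (n : ℝ) < x + 1) : ⌈x⌉₊ = n := by
  apply le_antisymm (Nat.ceil_le.2 h1)
  have h3 := Nat.le_ceil x
  have : (n : ℝ) < (⌈x⌉₊ : ℕ) + 1 := by linarith
  exact Nat.lt_succ_iff.1 (by exact_mod_cast this)

theorem aux_kseq (x y : ℝ) (hx : 0 < x) (hy : 0 < y) (hy1 : y < 1)
    (hxy : x⁻¹ = (pq x 1 : ℕ) + y) (j : ℕ) : kseq x j = ⌊(j : ℝ) / y⌋₊ := by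
  rw [kseq]
  refine aux_nth _ (fun j : ℕ => ⌊(j : ℝ) / y⌋₊) ?_ ?_ j
  · refine strictMono_nat_of_lt_succ fun n => ?_
    rw [← Nat.add_one_le_iff, Nat.le_floor_iff (by positivity)]
    have h := Nat.floor_le (a := (n : ℝ) / y) (by positivity)
    have : 1 < 1 / y := by rw [lt_div_iff₀ hy]; linarith
    push_cast
    rw [add_div]
    linarith
  · intro k
    rw [aux_tcount x hx, aux_ceil x y _ hy hxy, aux_ceil x y _ hy hxy]
    have hmono : ⌈(k : ℝ) * y⌉₊ ≤ ⌈((k + 1 : ℕ) : ℝ) * y⌉₊ := by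
      apply Nat.ceil_mono
      push_cast
      nlinarith
    have hiff : (⌈((k + 1 : ℕ) : ℝ) * y⌉₊ + pq x 1 * (k + 1) - (⌈(k : ℝ) * y⌉₊ + pq x 1 * k)
        = pq x 1 + 1) ↔ ⌈((k + 1 : ℕ) : ℝ) * y⌉₊ = ⌈(k : ℝ) * y⌉₊ + 1 := by
      rw [mul_add, mul_one]
      omega
    rw [hiff]
    have hfl : ∀ j : ℕ, ⌊(j : ℝ) / y⌋₊ = k ↔ (k : ℝ) * y ≤ j ∧ (j : ℝ) < (k + 1) * y := by
      intro j
      rw [Nat.floor_eq_iff (by positivity), le_div_iff₀ hy, div_lt_iff₀ hy]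
    simp only [hfl]
    constructor
    · intro h
      refine ⟨⌈(k : ℝ) * y⌉₊, Nat.le_ceil _, ?_⟩
      have : ⌈(k : ℝ) * y⌉₊ < ⌈((k + 1 : ℕ) : ℝ) * y⌉₊ := by omega
      rw [Nat.lt_ceil] at this
      exact_mod_cast this
    · rintro ⟨j, h1, h2⟩
      rw [aux_ceil_eq ((k : ℝ) * y) j h1 (by linarith)]
      apply aux_ceil_eq
      · push_cast; linarith
      · push_cast; linarith

theorem aux_rk (x y : ℝ) (hx : 0 < x) (hx1 : x < 1) (hy : 0 < y) (hy1 : y < 1)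
    (hxy : x⁻¹ = (pq x 1 : ℕ) + y) (j : ℕ) :
    rmin x (kseq x j) = j + pq x 1 * ⌊(j : ℝ) / y⌋₊ := by
  rw [aux_rmin x hx hx1, aux_ceil x y _ hy hxy, aux_kseq x y hx hy hy1 hxy]
  congr 1
  have h1 := Nat.floor_le (a := (j : ℝ) / y) (by positivity)
  have h2 := Nat.lt_floor_add_one ((j : ℝ) / y)
  rw [le_div_iff₀ hy] at h1
  rw [div_lt_iff₀ hy] at h2
  exact aux_ceil_eq _ _ h1 (by linarith)

theorem aux_floor (y z : ℝ) (b : ℕ) (hz : 0 < z) (hyz : y⁻¹ = b + z) (j : ℕ) :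
    ⌊(j : ℝ) / y⌋₊ = ⌊(j : ℝ) * z⌋₊ + b * j := by
  rw [div_eq_mul_inv, hyz, ← Nat.floor_add_natCast (by positivity)]
  congr 1
  push_cast
  ring

theorem aux_jbig (x y z : ℝ) (hx : 0 < x) (hx1 : x < 1) (hy : 0 < y) (hy1 : y < 1)
    (hz : 0 < z) (hz1 : z < 1) (ha : 1 ≤ pq x 1)
    (hxy : x⁻¹ = (pq x 1 : ℕ) + y) (hyz : y⁻¹ = (pq x 2 : ℕ) + z) (h : ℕ) :
    jbig x h = ⌈((h + 1 : ℕ) : ℝ) / z⌉₊ := by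
  have hz2 : 1 < 1 / z := by rw [lt_div_iff₀ hz]; linarith
  rw [jbig]
  refine aux_nth _ (fun h : ℕ => ⌈((h + 1 : ℕ) : ℝ) / z⌉₊) ?_ ?_ h
  · refine strictMono_nat_of_lt_succ fun n => ?_
    rw [Nat.lt_ceil]
    refine (Nat.ceil_lt_add_one (by positivity)).trans ?_
    push_cast
    rw [add_div ((n : ℝ) + 1) (1 : ℝ)]
    linarith
  · intro j
    rcases j with _ | j
    · simp only [Nat.cast_add, Nat.cast_one, Nat.ceil_eq_zero]
      constructor
      · omega
      · rintro ⟨n, hn⟩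
        have : 0 < ((n : ℝ) + 1) / z := by positivity
        linarith
    · rw [gseq, aux_rk x y hx hx1 hy hy1 hxy, aux_rk x y hx hx1 hy hy1 hxy,
        aux_floor y z _ hz hyz, aux_floor y z _ hz hyz]
      have hq : qden x 2 + qden x 1 = pq x 2 * pq x 1 + 1 + pq x 1 := by simp [qden]
      rw [hq, Nat.add_sub_cancel]
      have hmono : ⌊(j : ℝ) * z⌋₊ ≤ ⌊((j + 1 : ℕ) : ℝ) * z⌋₊ := by
        apply Nat.floor_mono
        push_cast
        nlinarith
      obtain ⟨d, hd⟩ := Nat.exists_eq_add_of_le hmono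
      have hiff : (1 ≤ j + 1 ∧ j + 1 + pq x 1 * (⌊((j + 1 : ℕ) : ℝ) * z⌋₊ + pq x 2 * (j + 1)) -
          (j + pq x 1 * (⌊(j : ℝ) * z⌋₊ + pq x 2 * j)) = pq x 2 * pq x 1 + 1 + pq x 1) ↔
          ⌊((j + 1 : ℕ) : ℝ) * z⌋₊ = ⌊(j : ℝ) * z⌋₊ + 1 := by
        rw [hd]
        have : j + 1 + pq x 1 * (⌊(j : ℝ) * z⌋₊ + d + pq x 2 * (j + 1)) =
          (1 + pq x 1 * pq x 2 + pq x 1 * d) + (j + pq x 1 * (⌊(j : ℝ) * z⌋₊ + pq x 2 * j)) := by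
          ring
        rw [this, Nat.add_sub_cancel]
        constructor
        · rintro ⟨-, h⟩
          have h3 : pq x 1 * d = pq x 1 * 1 := by linarith
          rw [Nat.eq_of_mul_eq_mul_left (by omega) h3]
        · intro h
          have : d = 1 := by omega
          subst this
          exact ⟨by omega, by ring⟩
      rw [hiff]
      constructor
      · intro h
        refine ⟨⌊(j : ℝ) * z⌋₊, ?_⟩
        have h1 := Nat.lt_floor_add_one ((j : ℝ) * z)
        have h2 := Nat.floor_le (a := ((j + 1 : ℕ) : ℝ) * z) (by positivity)
        rw [h] at h2
        apply aux_ceil_eq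
        · rw [div_le_iff₀ hz]; exact h2
        · rw [← sub_lt_iff_lt_add, lt_div_iff₀ hz]
          push_cast
          linarith
      · rintro ⟨n, hn⟩
        change ⌈((n + 1 : ℕ) : ℝ) / z⌉₊ = j + 1 at hn
        have h1 := Nat.le_ceil (((n + 1 : ℕ) : ℝ) / z)
        have h2 := Nat.ceil_lt_add_one (a := ((n + 1 : ℕ) : ℝ) / z) (by positivity)
        rw [hn] at h1 h2
        rw [div_le_iff₀ hz] at h1
        rw [← sub_lt_iff_lt_add, lt_div_iff₀ hz] at h2
        push_cast at h1 h2
        have e1 : ⌊((j + 1 : ℕ) : ℝ) * z⌋₊ = n + 1 := by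
          rw [Nat.floor_eq_iff (by positivity)]
          push_cast
          constructor <;> linarith
        have e2 : ⌊(j : ℝ) * z⌋₊ = n := by
          rw [Nat.floor_eq_iff (by positivity)]
          constructor <;> linarith
        rw [e1, e2]

theorem aux_iter (α : ℝ) (hirr : Irrational α) (h0 : 0 < α) (h1 : α < 1) (m : ℕ) :
    Irrational (gaussIter α m) ∧ 0 < gaussIter α m ∧ gaussIter α m < 1 := by
  induction m with
  | zero => exact ⟨hirr, h0, h1⟩
  | succ m ih =>
    have e : gaussIter α (m + 1) = Int.fract (gaussIter α m)⁻¹ := by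
      rw [gaussIter, Function.iterate_succ_apply']; rfl
    have hi : Irrational (gaussIter α (m + 1)) := by
      rw [e, Int.fract]
      exact ih.1.inv.sub_intCast _
    refine ⟨hi, ?_, ?_⟩
    · exact lt_of_le_of_ne (by rw [e]; exact Int.fract_nonneg _) hi.ne_zero.symm
    · rw [e]; exact Int.fract_lt_one _

theorem aux_step (α : ℝ) (hirr : Irrational α) (h0 : 0 < α) (h1 : α < 1) (m : ℕ) :
    (gaussIter α m)⁻¹ = (pq α (m + 1) : ℕ) + gaussIter α (m + 1) := by
  obtain ⟨_, h2, _⟩ := aux_iter α hirr h0 h1 m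
  have e : gaussIter α (m + 1) = Int.fract (gaussIter α m)⁻¹ := by
    rw [gaussIter, Function.iterate_succ_apply']; rfl
  rw [e, pq, Nat.add_sub_cancel, natCast_floor_eq_intCast_floor (by positivity)]
  exact (Int.floor_add_fract _).symm

/-- with `(j_h^{(m)})` the increasing enumeration of the `j ≥ 1` with
`g_j^{(m)} = q_2^{(m)} + q_1^{(m)}`, one has `j_0^{(m)} = a_{m+3} + 1` and
`j_h^{(m)} - j_{h-1}^{(m)} = t_h^{(m+2)}` for all `h ≥ 1`. -/
theorem jbig_eq (α : ℝ) (hirr : Irrational α) (h0 : 0 < α) (h1 : α < 1) (m : ℕ) :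
    jbig (gaussIter α m) 0 = pq α (m + 3) + 1 ∧
    ∀ h : ℕ, 1 ≤ h →
      jbig (gaussIter α m) h - jbig (gaussIter α m) (h - 1)
        = tcount (gaussIter α (m + 2)) h := by
  set x := gaussIter α m with hx
  obtain ⟨_, hx0, hx1⟩ := aux_iter α hirr h0 h1 m
  obtain ⟨_, hy0, hy1⟩ := aux_iter α hirr h0 h1 (m + 1)
  obtain ⟨_, hz0, hz1⟩ := aux_iter α hirr h0 h1 (m + 2)
  obtain ⟨_, hw0, hw1⟩ := aux_iter α hirr h0 h1 (m + 3)
  have hxy := aux_step α hirr h0 h1 m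
  have hyz := aux_step α hirr h0 h1 (m + 1)
  have hzw := aux_step α hirr h0 h1 (m + 2)
  have p1 : pq x 1 = pq α (m + 1) := rfl
  have p2 : pq x 2 = pq α (m + 2) := by
    have e : gaussIter x 1 = gaussIter α (m + 1) := by
      rw [hx, gaussIter, gaussIter, gaussIter, ← Function.iterate_add_apply, add_comm]
    change ⌊(gaussIter x 1)⁻¹⌋₊ = ⌊(gaussIter α (m + 1))⁻¹⌋₊
    rw [e]
  have ha : 1 ≤ pq x 1 := by
    rw [p1, pq, Nat.one_le_floor_iff]
    exact (one_lt_inv₀ hx0).2 hx1 |>.le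
  have key := aux_jbig x _ _ hx0 hx1 hy0 hy1 hz0 hz1 ha (by rw [p1]; exact hxy)
    (by rw [p2]; exact hyz)
  constructor
  · rw [key, aux_ceil _ _ _ hw0 hzw]
    rw [aux_ceil_eq _ 1 (by push_cast; linarith) (by push_cast; linarith)]
    ring
  · intro h hh
    obtain ⟨n, rfl⟩ := Nat.exists_eq_add_of_le' hh
    rw [key, key, aux_tcount _ hz0, Nat.add_sub_cancel]
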